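/- Near the singularity the periodic Green's function has a Euclidean Dirac expansion: there is C > 0 with |∇^k( G(z,t) − a₀/2 + 1/(2ρ) )| ≤ C ρ^{2−k} for all (z,t) with ρ = √(r² + t²) < π/2 and k = 0, 1, 2. -/

import Mathlib

open Real Filter

noncomputable section

/-- ℝ³ = ℝ² × ℝ, the universal cover of ℝ² × S¹; coordinates `(z, t)`, and near the
singular point `0` we use the local chart `ℂ × (−π, π)` with `ρ = √(r² + t²) = ‖x‖`. -/
abbrev E3 := EuclideanSpace ℝ (Fin 3)

/-- The regularising constants `a_{|m|}`. -/
def aCoeff (m : ℤ) : ℝ :=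
  if m = 0 then 2 * (Real.log (4 * Real.pi) - Real.eulerMascheroniConstant) / (2 * Real.pi)
  else 1 / (2 * |(m : ℝ)| * Real.pi)

/-- The `m`-th summand of the series defining the Green's function. -/
def gTerm (m : ℤ) (x : E3) : ℝ :=
  -(1 / 2) * (1 / Real.sqrt ((x 0) ^ 2 + (x 1) ^ 2 + (x 2 - 2 * m * Real.pi) ^ 2) - aCoeff m)

/-- The singular points `(0, 2kπ)`. -/
def singPt (k : ℤ) : E3 := (2 * k * Real.pi) • EuclideanSpace.single (2 : Fin 3) (1 : ℝ)

/-!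
Removing the `m = 0` summand from the series of `G` leaves the Coulomb potential of charges placed
at the points `(0, 2mπ)`, `m ≠ 0`, normalised to vanish at the origin. On a ball that stays away
from these points the series may be differentiated twice term by term, because the first two
derivatives of `‖y - a‖⁻¹` are `O(‖a‖⁻²)`; so the potential has a bounded second derivative. It is
even, as the charges are symmetric under `m ↦ -m`, so its value and its gradient vanish at the
origin, and integrating the second-derivative bound twice gives the orders `1`, `ρ` and `ρ ^ 2`.
-/

open Metric

set_option maxSynthPendingDepth 3

theorem hasSum_subtype_ne {ι M : Type*} [AddCommGroup M] [TopologicalSpace M]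
    [IsTopologicalAddGroup M] {f : ι → M} {s : M} (hf : HasSum f s) (j : ι) :
    HasSum (fun i : {i // i ≠ j} => f i) (s - f j) :=
  ((hasSum_singleton j f).hasSum_compl_iff).mpr (by rwa [add_sub_cancel])

section NormRpow

variable {E : Type*} [NormedAddCommGroup E] [InnerProductSpace ℝ E]

theorem hasFDerivAt_norm_rpow_of_ne_zero (q : ℝ) {y : E} (hy : y ≠ 0) :
    HasFDerivAt (fun z : E => ‖z‖ ^ q) ((q * ‖y‖ ^ (q - 2)) • innerSL ℝ y) y := by
  have hsq (z : E) (s : ℝ) : (‖z‖ ^ 2) ^ s = ‖z‖ ^ (2 * s) := by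
    rw [← rpow_natCast_mul (norm_nonneg z), Nat.cast_ofNat]
  have h := (hasStrictFDerivAt_norm_sq y).hasFDerivAt.rpow_const (p := q / 2) (by simp [hy])
  simp only [hsq, mul_div_cancel₀ q two_ne_zero] at h
  refine h.congr_fderiv ?_
  rw [← Nat.cast_smul_eq_nsmul ℝ, smul_smul]
  ring_nf

variable (E) in
/-- The real inner product as a bilinear map: `innerSL ℝ` with its type read as linear, rather than
conjugate-linear, in the first variable, as the calculus lemmas need. -/
def realInnerCLM : E →L[ℝ] E →L[ℝ] ℝ := innerSL ℝ

theorem norm_realInnerCLM_le : ‖realInnerCLM E‖ ≤ 1 :=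
  norm_innerSL_le ℝ

/-- The derivative of `‖·‖ ^ q`, valid away from the origin. -/
def normRpowFDeriv (q : ℝ) (y : E) : E →L[ℝ] ℝ :=
  (q * ‖y‖ ^ (q - 2)) • innerSL ℝ y

/-- The second derivative of `‖·‖ ^ q`, valid away from the origin. -/
def normRpowFDerivTwo (q : ℝ) (y : E) : E →L[ℝ] E →L[ℝ] ℝ :=
  (q * ‖y‖ ^ (q - 2)) • realInnerCLM E +
    ((q * ((q - 2) * ‖y‖ ^ (q - 4))) • innerSL ℝ y).smulRight (innerSL ℝ y)

theorem hasFDerivAt_normRpowFDeriv (q : ℝ) {y : E} (hy : y ≠ 0) :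
    HasFDerivAt (normRpowFDeriv q) (normRpowFDerivTwo q y) y := by
  have hcoeff := (hasFDerivAt_norm_rpow_of_ne_zero (q - 2) hy).const_mul q
  rw [smul_smul, sub_sub, show (2 : ℝ) + 2 = 4 by norm_num] at hcoeff
  exact hcoeff.smul (realInnerCLM E).hasFDerivAt

theorem norm_normRpowFDeriv_le (q : ℝ) (y : E) :
    ‖normRpowFDeriv q y‖ ≤ |q| * ‖y‖ ^ (q - 1) := by
  rcases eq_or_ne y 0 with rfl | hy
  · simp only [normRpowFDeriv, map_zero, smul_zero, norm_zero]
    positivity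
  · have hpow : ‖y‖ ^ (q - 1) = ‖y‖ ^ (q - 2) * ‖y‖ := by
      rw [← rpow_add_one (norm_ne_zero_iff.mpr hy)]
      ring_nf
    rw [normRpowFDeriv, norm_smul, norm_mul, innerSL_apply_norm, hpow, mul_assoc,
      Real.norm_eq_abs, Real.norm_of_nonneg (by positivity)]

theorem norm_normRpowFDerivTwo_le (q : ℝ) (y : E) :
    ‖normRpowFDerivTwo q y‖ ≤ |q| * (1 + |q - 2|) * ‖y‖ ^ (q - 2) := by
  have hinner : ‖(q * ‖y‖ ^ (q - 2)) • realInnerCLM E‖ ≤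
      |q| * ‖y‖ ^ (q - 2) := by
    rw [norm_smul, norm_mul, Real.norm_eq_abs, Real.norm_of_nonneg (by positivity)]
    exact mul_le_of_le_one_right (by positivity) norm_realInnerCLM_le
  have hrank : ‖((q * ((q - 2) * ‖y‖ ^ (q - 4))) • innerSL ℝ y).smulRight (innerSL ℝ y)‖ ≤
      |q| * |q - 2| * ‖y‖ ^ (q - 2) := by
    rcases eq_or_ne y 0 with rfl | hy
    · simp only [map_zero, ContinuousLinearMap.smulRight_zero, norm_zero]
      positivity
    · have hpow : ‖y‖ ^ (q - 2) = ‖y‖ ^ (q - 4) * ‖y‖ ^ 2 := by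
        rw [← rpow_add_natCast (norm_ne_zero_iff.mpr hy)]
        ring_nf
      rw [ContinuousLinearMap.norm_smulRight_apply, norm_smul, norm_mul, norm_mul,
        innerSL_apply_norm, Real.norm_eq_abs, Real.norm_eq_abs,
        Real.norm_of_nonneg (by positivity), hpow]
      exact le_of_eq (by ring)
  calc ‖normRpowFDerivTwo q y‖ ≤ |q| * ‖y‖ ^ (q - 2) + |q| * |q - 2| * ‖y‖ ^ (q - 2) :=
        norm_add_le_of_le hinner hrank
    _ = |q| * (1 + |q - 2|) * ‖y‖ ^ (q - 2) := by ring

end NormRpow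

section Separation

variable {E : Type*} [SeminormedAddCommGroup E] {a y : E} {r R : ℝ}

theorem mul_norm_le_norm_sub (hrR : r < R) (ha : R ≤ ‖a‖) (hy : ‖y‖ < r) :
    (1 - r / R) * ‖a‖ ≤ ‖y - a‖ := by
  have hr : 0 < r := (norm_nonneg y).trans_lt hy
  have hR : 0 < R := hr.trans hrR
  have hra : r ≤ r / R * ‖a‖ := by
    rw [div_mul_eq_mul_div, le_div_iff₀ hR]
    gcongr
  have htri := norm_sub_norm_le a y
  rw [norm_sub_rev] at htri
  linarith

theorem sub_ne_zero_of_norm_lt_norm (h : ‖y‖ < ‖a‖) : y - a ≠ 0 :=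
  sub_ne_zero.mpr (ne_of_apply_ne norm h.ne)

theorem norm_sub_rpow_le {s : ℝ} (hs : s ≤ 0) (hrR : r < R) (ha : R ≤ ‖a‖) (hy : ‖y‖ < r) :
    ‖y - a‖ ^ s ≤ (1 - r / R) ^ s * ‖a‖ ^ s := by
  have hR : 0 < R := ((norm_nonneg y).trans_lt hy).trans hrR
  have hc : 0 < 1 - r / R := sub_pos.mpr ((div_lt_one hR).mpr hrR)
  have ha0 : 0 < ‖a‖ := hR.trans_le ha
  rw [← mul_rpow hc.le ha0.le]
  exact rpow_le_rpow_of_nonpos (by positivity) (mul_norm_le_norm_sub hrR ha hy) hs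

end Separation

section Taylor

variable {E F : Type*} [NormedAddCommGroup E] [NormedSpace ℝ E] [NormedAddCommGroup F]
  [NormedSpace ℝ F] {f : E → F}

theorem fderiv_zero_of_even (hf : f.Even) : fderiv ℝ f 0 = 0 := by
  have h := fderiv_comp_smul (𝕜 := ℝ) (f := f) (x := 0) (-1)
  simp only [neg_smul, one_smul, hf.eq, neg_zero] at h
  rw [eq_neg_iff_add_eq_zero, ← two_smul ℝ] at h
  exact (smul_eq_zero_iff_right two_ne_zero).mp h

theorem norm_le_mul_norm_of_norm_fderiv_le {s : Set E} {C : ℝ} (hs : Convex ℝ s) (h0s : 0 ∈ s)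
    (hf : ∀ y ∈ s, DifferentiableAt ℝ f y) (hC : ∀ y ∈ s, ‖fderiv ℝ f y‖ ≤ C) (hf0 : f 0 = 0)
    {x : E} (hx : x ∈ s) : ‖f x‖ ≤ C * ‖x‖ := by
  simpa [hf0] using hs.norm_image_sub_le_of_norm_fderiv_le hf hC h0s hx

variable {r C : ℝ} (hf : ∀ y ∈ ball (0 : E) r, DifferentiableAt ℝ f y)
  (hf' : ∀ y ∈ ball (0 : E) r, DifferentiableAt ℝ (fderiv ℝ f) y)
  (hC : ∀ y ∈ ball (0 : E) r, ‖fderiv ℝ (fderiv ℝ f) y‖ ≤ C)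
  (hf0 : f 0 = 0) (hf'0 : fderiv ℝ f 0 = 0)

include hf' hC hf'0

theorem norm_fderiv_le_mul_norm {x : E} (hx : x ∈ ball 0 r) : ‖fderiv ℝ f x‖ ≤ C * ‖x‖ :=
  norm_le_mul_norm_of_norm_fderiv_le (convex_ball 0 r) (mem_ball_self (pos_of_mem_ball hx))
    hf' hC hf'0 hx

include hf hf0

theorem norm_le_mul_norm_sq {x : E} (hx : x ∈ ball 0 r) : ‖f x‖ ≤ C * ‖x‖ ^ 2 := by
  have hC0 : 0 ≤ C := (norm_nonneg _).trans (hC x hx)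
  have hsub : closedBall (0 : E) ‖x‖ ⊆ ball 0 r := closedBall_subset_ball (mem_ball_zero_iff.mp hx)
  have hderiv : ∀ y ∈ closedBall (0 : E) ‖x‖, ‖fderiv ℝ f y‖ ≤ C * ‖x‖ := fun y hy =>
    (norm_fderiv_le_mul_norm hf' hC hf'0 (hsub hy)).trans
      (mul_le_mul_of_nonneg_left (mem_closedBall_zero_iff.mp hy) hC0)
  calc ‖f x‖ ≤ C * ‖x‖ * ‖x‖ :=
        norm_le_mul_norm_of_norm_fderiv_le (convex_closedBall 0 ‖x‖)
          (mem_closedBall_self (norm_nonneg x)) (fun y hy => hf y (hsub hy)) hderiv hf0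
          (mem_closedBall_zero_iff.mpr le_rfl)
    _ = C * ‖x‖ ^ 2 := by ring

theorem norm_iteratedFDeriv_le_mul_norm_rpow {x : E} (hx : x ∈ ball 0 r) {k : ℕ} (hk : k ≤ 2) :
    ‖iteratedFDeriv ℝ k f x‖ ≤ C * ‖x‖ ^ ((2 : ℝ) - k) := by
  interval_cases k
  · simpa using norm_le_mul_norm_sq hf hf' hC hf0 hf'0 hx
  · rw [norm_iteratedFDeriv_one, Nat.cast_one, show (2 : ℝ) - 1 = 1 by norm_num, rpow_one]
    exact norm_fderiv_le_mul_norm hf' hC hf'0 hx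
  · rw [← norm_iteratedFDeriv_fderiv, norm_iteratedFDeriv_one]
    simpa using hC x hx

end Taylor

section RieszPotential

variable {E : Type*} [NormedAddCommGroup E] {ι : Type*}

/-- The Riesz potential `∑ wᵢ ‖y - aᵢ‖ ^ q` of charges `wᵢ` placed at `aᵢ`, renormalised to vanish
at the origin: subtracting `‖aᵢ‖ ^ q` makes the series converge under the weaker condition
`∑ |wᵢ| ‖aᵢ‖ ^ (q - 1) < ∞`. The value `q = -1` gives the Coulomb potential. -/
def rieszPotential (q : ℝ) (w : ι → ℝ) (a : ι → E) (y : E) : ℝ :=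
  ∑' i, w i * (‖y - a i‖ ^ q - ‖a i‖ ^ q)

variable {q r R : ℝ} {w : ι → ℝ} {a : ι → E}

theorem rieszPotential_zero : rieszPotential q w a 0 = 0 := by
  simp [rieszPotential]

theorem even_rieszPotential {e : ι ≃ ι} (hw : ∀ i, w (e i) = w i) (ha : ∀ i, a (e i) = -a i) :
    (rieszPotential q w a).Even := fun y => by
  have hnorm (i : ι) : ‖-y + a i‖ = ‖y - a i‖ := by rw [neg_add_eq_sub, norm_sub_rev]
  rw [rieszPotential, rieszPotential, ← e.tsum_eq]
  simp only [hw, ha, sub_neg_eq_add, hnorm, norm_neg]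

variable [InnerProductSpace ℝ E] (hq : q ≤ 1) (hrR : r < R) (ha : ∀ i, R ≤ ‖a i‖)
  (hsum : Summable fun i => |w i| * ‖a i‖ ^ (q - 1))

include hq hrR ha in
theorem norm_smul_normRpowFDeriv_sub_le {y : E} (hy : y ∈ ball 0 r) (i : ι) :
    ‖w i • normRpowFDeriv q (y - a i)‖ ≤
      |q| * (1 - r / R) ^ (q - 1) * (|w i| * ‖a i‖ ^ (q - 1)) := by
  have hpow := norm_sub_rpow_le (sub_nonpos.mpr hq) hrR (ha i) (mem_ball_zero_iff.mp hy)
  rw [norm_smul, Real.norm_eq_abs]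
  calc |w i| * ‖normRpowFDeriv q (y - a i)‖
      ≤ |w i| * (|q| * ((1 - r / R) ^ (q - 1) * ‖a i‖ ^ (q - 1))) := by
        grw [norm_normRpowFDeriv_le, hpow]
    _ = |q| * (1 - r / R) ^ (q - 1) * (|w i| * ‖a i‖ ^ (q - 1)) := by ring

include hq hrR ha in
theorem norm_smul_normRpowFDerivTwo_sub_le {y : E} (hy : y ∈ ball 0 r) (i : ι) :
    ‖w i • normRpowFDerivTwo q (y - a i)‖ ≤
      |q| * (1 + |q - 2|) * (1 - r / R) ^ (q - 2) * R⁻¹ * (|w i| * ‖a i‖ ^ (q - 1)) := by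
  have hy' : ‖y‖ < r := mem_ball_zero_iff.mp hy
  have hR : 0 < R := ((norm_nonneg y).trans_lt hy').trans hrR
  have ha0 : 0 < ‖a i‖ := hR.trans_le (ha i)
  have hc : 0 < 1 - r / R := sub_pos.mpr ((div_lt_one hR).mpr hrR)
  have hpow := norm_sub_rpow_le (by linarith : q - 2 ≤ 0) hrR (ha i) hy'
  have hdrop : ‖a i‖ ^ (q - 2) ≤ R⁻¹ * ‖a i‖ ^ (q - 1) := by
    rw [show q - 2 = q - 1 - 1 by ring, rpow_sub_one ha0.ne', div_eq_inv_mul]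
    gcongr
    exact ha i
  rw [norm_smul, Real.norm_eq_abs]
  calc |w i| * ‖normRpowFDerivTwo q (y - a i)‖
      ≤ |w i| * (|q| * (1 + |q - 2|) * ((1 - r / R) ^ (q - 2) * (R⁻¹ * ‖a i‖ ^ (q - 1)))) := by
        grw [norm_normRpowFDerivTwo_le, hpow, hdrop]
    _ = |q| * (1 + |q - 2|) * (1 - r / R) ^ (q - 2) * R⁻¹ * (|w i| * ‖a i‖ ^ (q - 1)) := by ring

include hq hrR ha hsum

theorem hasFDerivAt_rieszPotential {y : E} (hy : y ∈ ball 0 r) :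
    HasFDerivAt (rieszPotential q w a) (∑' i, w i • normRpowFDeriv q (y - a i)) y := by
  have hterm (i : ι) (z : E) (hz : z ∈ ball 0 r) :
      HasFDerivAt (fun z => w i * (‖z - a i‖ ^ q - ‖a i‖ ^ q))
        (w i • normRpowFDeriv q (z - a i)) z :=
    (((hasFDerivAt_comp_sub (a i)).mpr (hasFDerivAt_norm_rpow_of_ne_zero q
      (sub_ne_zero_of_norm_lt_norm (((mem_ball_zero_iff.mp hz).trans hrR).trans_le (ha i)))))
        |>.sub_const (‖a i‖ ^ q)).const_mul (w i)
  exact hasFDerivAt_tsum_of_isPreconnected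
    (hsum.mul_left (|q| * (1 - r / R) ^ (q - 1))) isOpen_ball
    (convex_ball 0 r).isPreconnected hterm
    (fun i _ hz => norm_smul_normRpowFDeriv_sub_le hq hrR ha hz i)
    (mem_ball_self (pos_of_mem_ball hy)) (by simp [summable_zero]) hy

theorem hasFDerivAt_fderiv_rieszPotential {y : E} (hy : y ∈ ball 0 r) :
    HasFDerivAt (fderiv ℝ (rieszPotential q w a))
      (∑' i, w i • normRpowFDerivTwo q (y - a i)) y := by
  have hterm (i : ι) (z : E) (hz : z ∈ ball 0 r) :
      HasFDerivAt (fun z => w i • normRpowFDeriv q (z - a i))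
        (w i • normRpowFDerivTwo q (z - a i)) z :=
    ((hasFDerivAt_comp_sub (a i)).mpr (hasFDerivAt_normRpowFDeriv q (sub_ne_zero_of_norm_lt_norm
      (((mem_ball_zero_iff.mp hz).trans hrR).trans_le (ha i))))).const_smul (w i)
  have hsumDeriv : Summable fun i => w i • normRpowFDeriv q (y - a i) :=
    .of_norm_bounded (hsum.mul_left _) (norm_smul_normRpowFDeriv_sub_le hq hrR ha hy)
  have htsum := hasFDerivAt_tsum_of_isPreconnected
    (hsum.mul_left (|q| * (1 + |q - 2|) * (1 - r / R) ^ (q - 2) * R⁻¹)) isOpen_ball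
    (convex_ball 0 r).isPreconnected hterm
    (fun i _ hz => norm_smul_normRpowFDerivTwo_sub_le hq hrR ha hz i) hy hsumDeriv hy
  refine htsum.congr_of_eventuallyEq ?_
  filter_upwards [isOpen_ball.mem_nhds hy] with z hz
  exact (hasFDerivAt_rieszPotential hq hrR ha hsum hz).fderiv

theorem exists_norm_fderiv_fderiv_rieszPotential_le :
    ∃ C > 0, ∀ y ∈ ball (0 : E) r, ‖fderiv ℝ (fderiv ℝ (rieszPotential q w a)) y‖ ≤ C := by
  set S := ∑' i, |q| * (1 + |q - 2|) * (1 - r / R) ^ (q - 2) * R⁻¹ * (|w i| * ‖a i‖ ^ (q - 1))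
  refine ⟨max S 1, by positivity, fun y hy => ?_⟩
  rw [(hasFDerivAt_fderiv_rieszPotential hq hrR ha hsum hy).fderiv]
  exact (tsum_of_norm_bounded (hsum.mul_left _).hasSum
    (norm_smul_normRpowFDerivTwo_sub_le hq hrR ha hy)).trans (le_max_left _ _)

theorem exists_norm_iteratedFDeriv_rieszPotential_le
    (heven : (rieszPotential q w a).Even) :
    ∃ C > 0, ∀ x ∈ ball (0 : E) r, ∀ k : ℕ, k ≤ 2 →
      ‖iteratedFDeriv ℝ k (rieszPotential q w a) x‖ ≤ C * ‖x‖ ^ ((2 : ℝ) - k) := by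
  obtain ⟨C, hC0, hC⟩ := exists_norm_fderiv_fderiv_rieszPotential_le hq hrR ha hsum
  refine ⟨C, hC0, fun x hx k hk => ?_⟩
  exact norm_iteratedFDeriv_le_mul_norm_rpow
    (fun y hy => (hasFDerivAt_rieszPotential hq hrR ha hsum hy).differentiableAt)
    (fun y hy => (hasFDerivAt_fderiv_rieszPotential hq hrR ha hsum hy).differentiableAt) hC
    rieszPotential_zero (fderiv_zero_of_even heven) hx hk

end RieszPotential

section Green

theorem norm_singPt (m : ℤ) : ‖singPt m‖ = 2 * π * |(m : ℝ)| := by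
  rw [singPt, norm_smul, PiLp.norm_single, norm_one, mul_one, norm_mul, norm_mul,
    Real.norm_ofNat, Real.norm_eq_abs, Real.norm_of_nonneg pi_nonneg]
  ring

theorem singPt_neg (m : ℤ) : singPt (-m) = -singPt m := by
  simp [singPt]

theorem two_pi_le_norm_singPt {m : ℤ} (hm : m ≠ 0) : 2 * π ≤ ‖singPt m‖ := by
  rw [norm_singPt]
  exact le_mul_of_one_le_right two_pi_pos.le (by exact_mod_cast Int.one_le_abs hm)

theorem ne_singPt_of_norm_lt {y : E3} (hy0 : y ≠ 0) (hy : ‖y‖ < 2 * π) (m : ℤ) : y ≠ singPt m := by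
  rintro rfl
  rcases eq_or_ne m 0 with rfl | hm
  · simp [singPt] at hy0
  · exact hy.not_ge (two_pi_le_norm_singPt hm)

theorem summable_norm_singPt_rpow : Summable fun m : ℤ => ‖singPt m‖ ^ (-2 : ℝ) := by
  simp only [norm_singPt, mul_rpow two_pi_pos.le (abs_nonneg _)]
  exact (summable_abs_int_rpow one_lt_two).mul_left _

theorem gTerm_eq (m : ℤ) (y : E3) : gTerm m y = -(1 / 2) * (‖y - singPt m‖⁻¹ - aCoeff m) := by
  rw [gTerm, EuclideanSpace.norm_eq, Fin.sum_univ_three]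
  simp [singPt]

theorem aCoeff_eq_inv_norm_singPt {m : ℤ} (hm : m ≠ 0) : aCoeff m = ‖singPt m‖⁻¹ := by
  rw [aCoeff, if_neg hm, norm_singPt, one_div, mul_right_comm]

/-- The potential that remains of the Green's function near `0` once the pole at `0` and its
constant `a₀` are taken away: the Coulomb potential of charges `-1/2` at the `(0, 2mπ)`, `m ≠ 0`. -/
def greenRegularPart : E3 → ℝ :=
  rieszPotential (-1) (fun _ => -(1 / 2)) fun m : {m : ℤ // m ≠ 0} => singPt m

theorem even_greenRegularPart : greenRegularPart.Even :=
  even_rieszPotential (e := (Equiv.neg ℤ).subtypeEquiv fun _ => neg_ne_zero.symm)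
    (fun _ => rfl) fun m => singPt_neg m

theorem green_sub_add_eq_greenRegularPart {y : E3} {g : ℝ} (hg : HasSum (fun m => gTerm m y) g) :
    g - aCoeff 0 / 2 + 1 / (2 * ‖y‖) = greenRegularPart y := by
  have hzero : gTerm 0 y = aCoeff 0 / 2 - 1 / (2 * ‖y‖) := by
    rw [gTerm_eq]
    simp [singPt]
    ring
  have hterm (m : {m : ℤ // m ≠ 0}) :
      gTerm m y = -(1 / 2) * (‖y - singPt m‖ ^ (-1 : ℝ) - ‖singPt m‖ ^ (-1 : ℝ)) := by
    rw [gTerm_eq, aCoeff_eq_inv_norm_singPt m.2, rpow_neg_one, rpow_neg_one]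
  rw [greenRegularPart, rieszPotential, ← tsum_congr hterm, (hasSum_subtype_ne hg 0).tsum_eq, hzero]
  ring

theorem exists_norm_iteratedFDeriv_greenRegularPart_le {r : ℝ} (hr : r < 2 * π) :
    ∃ C > 0, ∀ x ∈ ball (0 : E3) r, ∀ k : ℕ, k ≤ 2 →
      ‖iteratedFDeriv ℝ k greenRegularPart x‖ ≤ C * ‖x‖ ^ ((2 : ℝ) - k) := by
  refine exists_norm_iteratedFDeriv_rieszPotential_le (by norm_num) hr
    (fun m => two_pi_le_norm_singPt m.2) ?_ even_greenRegularPart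
  rw [show (-1 : ℝ) - 1 = -2 by norm_num]
  exact (summable_norm_singPt_rpow.subtype {m | m ≠ 0}).mul_left _

theorem green_function_dirac_expansion_general
    (G : E3 → ℝ)
    (hG : ∀ x : E3, (∀ k : ℤ, x ≠ singPt k) → HasSum (fun m : ℤ => gTerm m x) (G x))
    {r : ℝ} (hr : r < 2 * π) :
    ∃ C > 0, ∀ x : E3, x ≠ 0 → ‖x‖ < r → ∀ k : ℕ, k ≤ 2 →
      ‖iteratedFDeriv ℝ k (fun y : E3 => G y - aCoeff 0 / 2 + 1 / (2 * ‖y‖)) x‖ ≤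
        C * ‖x‖ ^ ((2 : ℝ) - k) := by
  obtain ⟨C, hC0, hC⟩ := exists_norm_iteratedFDeriv_greenRegularPart_le hr
  refine ⟨C, hC0, fun x hx0 hx k hk => ?_⟩
  have hreg : (fun y : E3 => G y - aCoeff 0 / 2 + 1 / (2 * ‖y‖)) =ᶠ[nhds x] greenRegularPart := by
    filter_upwards [isOpen_ne.mem_nhds hx0,
      continuous_norm.continuousAt.eventually_lt_const (hx.trans hr)] with y hy0 hy
    exact green_sub_add_eq_greenRegularPart (hG y (ne_singPt_of_norm_lt hy0 hy))
  rw [(hreg.iteratedFDeriv ℝ k).eq_of_nhds]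
  exact hC x (mem_ball_zero_iff.mpr hx) k hk

end Green

/-- Near the singularity the periodic Green's function has a Euclidean
Dirac expansion: there is `C > 0` with `|∇^k(G(z,t) − a₀/2 + 1/(2ρ))| ≤ C ρ^{2−k}` for all
`(z,t)` with `ρ = √(r² + t²) < π/2` and `k = 0, 1, 2`. -/
theorem green_function_dirac_expansion
    (G : E3 → ℝ)
    (hG : ∀ x : E3, (∀ k : ℤ, x ≠ singPt k) → HasSum (fun m : ℤ => gTerm m x) (G x)) :
    ∃ C > 0, ∀ x : E3, x ≠ 0 → ‖x‖ < Real.pi / 2 → ∀ k : ℕ, k ≤ 2 →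
      ‖iteratedFDeriv ℝ k (fun y : E3 => G y - aCoeff 0 / 2 + 1 / (2 * ‖y‖)) x‖ ≤
        C * ‖x‖ ^ ((2 : ℝ) - k) :=
  green_function_dirac_expansion_general G hG (by linarith [pi_pos])

end
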